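/- Let L = 2m+1 ≥ 3 be an odd integer, let ζ_L = exp(2πi/L), and let Z be the L×L diagonal matrix with (Z)_{ii} = ζ_L^{m−i} for i = 0,…,L−1. Then (A^{F,L})² = I_L, while for every integer k with 1 ≤ k ≤ L−1 one has (Z^k A^{F,L})² ≠ I_L. -/

import Mathlib

open Matrix Polynomial

/-- The M-type Grover coin `A^{M,L}` for `L = 2m+1`: diagonal entries `-(2m-1)/L`,
off-diagonal entries `2/L`. -/
noncomputable def coinM (m : ℕ) : Matrix (Fin (2*m+1)) (Fin (2*m+1)) ℂ :=
  fun i j => if i = j then (1 - 2*(m:ℂ)) / (2*(m:ℂ)+1) else 2 / (2*(m:ℂ)+1)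

/-- The F-type Grover coin `A^{F,L}` for `L = 2m+1`: anti-diagonal entries `-(2m-1)/L`,
all other entries `2/L`. -/
noncomputable def coinF (m : ℕ) : Matrix (Fin (2*m+1)) (Fin (2*m+1)) ℂ :=
  fun i j => if (i : ℕ) + (j : ℕ) = 2*m then (1 - 2*(m:ℂ)) / (2*(m:ℂ)+1)
    else 2 / (2*(m:ℂ)+1)

/-- The time-evolution operator of the `L`-state (`L = 2m+1`) Grover walk with local coin `A`
on the cycle `C_N`: entry at `((v,i),(w,j))` is `A i j` if `v ≡ w + (i - m) (mod N)`,
and `0` otherwise. -/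
noncomputable def walkU (m N : ℕ) (A : Matrix (Fin (2*m+1)) (Fin (2*m+1)) ℂ) :
    Matrix ((ZMod N) × Fin (2*m+1)) ((ZMod N) × Fin (2*m+1)) ℂ :=
  fun p q => if p.1 = q.1 + ((p.2 : ℕ) : ZMod N) - (m : ZMod N) then A p.2 q.2 else 0

/-- `ζ_N = exp(2πi/N)`. -/
noncomputable def zetaN (N : ℕ) : ℂ := Complex.exp (2 * Real.pi * Complex.I / N)

/-- The diagonal matrix `Z = diag(ζ_N^m, ζ_N^{m-1}, …, ζ_N^{-m})`. -/
noncomputable def Zmat (N m : ℕ) : Matrix (Fin (2*m+1)) (Fin (2*m+1)) ℂ :=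
  Matrix.diagonal fun i => zetaN N ^ ((m : ℤ) - ((i : ℕ) : ℤ))

/-- The integer power `Z^k` of the diagonal matrix `Z`, defined for any `k ∈ ℤ`. -/
noncomputable def ZmatPow (N m : ℕ) (k : ℤ) : Matrix (Fin (2*m+1)) (Fin (2*m+1)) ℂ :=
  Matrix.diagonal fun i => zetaN N ^ ((((m : ℤ) - ((i : ℕ) : ℤ))) * k)

/-- `f^{M,L}_{N,k}(x) = det(x·I_L − Z^k A^{M,L})`. -/
noncomputable def fMk (m N : ℕ) (k : ℤ) : Polynomial ℂ :=
  (ZmatPow N m k * coinM m).charpoly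

/-- `f^{M,L}_N(x) = ∏_{k=0}^{N-1} f^{M,L}_{N,k}(x)`. -/
noncomputable def fM (m N : ℕ) : Polynomial ℂ :=
  ∏ k ∈ Finset.range N, fMk m N (k : ℤ)

/-- `f^{F,L}_{N,k}(x) = det(x·I_L − Z^k A^{F,L})`. -/
noncomputable def fFk (m N : ℕ) (k : ℤ) : Polynomial ℂ :=
  (ZmatPow N m k * coinF m).charpoly

/-- `f^{F,L}_N(x) = ∏_{k=0}^{N-1} f^{F,L}_{N,k}(x)`. -/
noncomputable def fF (m N : ℕ) : Polynomial ℂ :=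
  ∏ k ∈ Finset.range N, fFk m N (k : ℤ)

/-! With `J` the all-ones matrix and `P` the reversal permutation matrix, the coin is `(2/L) J - P`.
Since `J² = L J`, `J P = P J = J` and `P² = 1`, it is an involution. For an involution `A`,
`(D A)² = 1` means `D A D = A`; when `D = diag(d)` and `A` has no zero entry, this says
`d i * d j = 1` for all `i` and `j`. For `d i = w ^ (m - i)` the two indices `i = m`, `j = m - 1`
already force `w = 1`, and `w = ζ_N ^ k` is `1` exactly when `N ∣ k`. -/

theorem mul_sq_eq_one_iff_mul_mul_eq {M : Type*} [Monoid M] {a b : M} (ha : a ^ 2 = 1) :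
    (b * a) ^ 2 = 1 ↔ b * a * b = a := by
  have haa : a * a = 1 := by rw [← sq, ha]
  constructor
  · intro h
    calc b * a * b = b * a * b * (a * a) := by rw [haa, mul_one]
      _ = (b * a) ^ 2 * a := by simp only [sq, mul_assoc]
      _ = a := by rw [h, one_mul]
  · intro h
    rw [sq, ← mul_assoc, h, haa]

theorem diagonal_mul_mul_diagonal_eq_self_iff {l n R : Type*} [Fintype l] [DecidableEq l]
    [Fintype n] [DecidableEq n] [CommSemiring R] [IsCancelMulZero R] {A : Matrix l n R}
    (hA : ∀ i j, A i j ≠ 0) (d : l → R) (e : n → R) :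
    diagonal d * A * diagonal e = A ↔ ∀ i j, d i * e j = 1 := by
  simp only [← Matrix.ext_iff, mul_diagonal, diagonal_mul, mul_right_comm (d _) (A _ _),
    mul_eq_right₀ (hA _ _)]

theorem smul_vecMulVec_one_sub_permMatrix_sq {n R : Type*} [Fintype n] [DecidableEq n]
    [CommRing R] {c : R} (hc : Fintype.card n * c = 2) {σ : Equiv.Perm n} (hσ : σ ^ 2 = 1) :
    (c • vecMulVec 1 1 - σ.permMatrix R) ^ 2 = 1 := by
  set J : Matrix n n R := vecMulVec 1 1
  set P : Matrix n n R := σ.permMatrix R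
  have hJJ : J * J = (Fintype.card n : R) • J := by
    rw [vecMulVec_mul_vecMulVec, one_dotProduct_one, vecMulVec_smul]
  have hJP : J * P = J := by
    rw [vecMulVec_mul, vecMul_permMatrix, Pi.one_comp]
  have hPJ : P * J = J := by
    rw [mul_vecMulVec, permMatrix_mulVec, Pi.one_comp]
  have hPP : P * P = 1 := by
    rw [← permMatrix_mul, ← sq, hσ, permMatrix_one]
  calc (c • J - P) ^ 2 = c • c • (J * J) - c • (J * P) - c • (P * J) + P * P := by
        simp only [sq, sub_mul, mul_sub, smul_mul_assoc, mul_smul_comm]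
        module
    _ = (c * (Fintype.card n * c - 2)) • J + 1 := by
        rw [hJJ, hJP, hPJ, hPP]
        module
    _ = 1 := by rw [hc, sub_self, mul_zero, zero_smul, zero_add]

theorem two_mul_natCast_add_one_ne_zero {R : Type*} [NonAssocSemiring R] [CharZero R] (m : ℕ) :
    (2 * m + 1 : R) ≠ 0 :=
  mod_cast (2 * m).succ_ne_zero

theorem coinF_eq_smul_vecMulVec_one_sub_permMatrix (m : ℕ) :
    coinF m = (2 / (2 * m + 1) : ℂ) • vecMulVec 1 1 - Fin.revPerm.permMatrix ℂ := by
  have hL : (2 * m + 1 : ℂ) ≠ 0 := two_mul_natCast_add_one_ne_zero m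
  ext i j
  have hrev : (i : ℕ) + j = 2 * m ↔ i.rev = j := by rw [Fin.ext_iff, Fin.val_rev]; omega
  have hval : (1 - 2 * m) / (2 * m + 1) = (2 / (2 * m + 1) - 1 : ℂ) := by field_simp; ring
  by_cases h : i.rev = j <;>
    simp [coinF, hrev, h, hval, Equiv.Perm.permMatrix, PEquiv.toMatrix_apply]

theorem coinF_sq (m : ℕ) : coinF m ^ 2 = 1 := by
  rw [coinF_eq_smul_vecMulVec_one_sub_permMatrix]
  refine smul_vecMulVec_one_sub_permMatrix_sq ?_ ?_
  · rw [Fintype.card_fin]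
    push_cast
    exact mul_div_cancel₀ 2 (two_mul_natCast_add_one_ne_zero m)
  · ext i
    simp [sq]

theorem coinF_apply_ne_zero (m : ℕ) (i j : Fin (2 * m + 1)) : coinF m i j ≠ 0 := by
  have hnum : (1 - 2 * m : ℂ) ≠ 0 :=
    sub_ne_zero.2 (mod_cast (show 1 ≠ 2 * m by omega))
  unfold coinF
  split_ifs
  · exact div_ne_zero hnum (two_mul_natCast_add_one_ne_zero m)
  · exact div_ne_zero two_ne_zero (two_mul_natCast_add_one_ne_zero m)

theorem isPrimitiveRoot_zetaN {N : ℕ} (hN : N ≠ 0) : IsPrimitiveRoot (zetaN N) N :=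
  Complex.isPrimitiveRoot_exp N hN

theorem Zmat_pow (N m k : ℕ) :
    Zmat N m ^ k = diagonal fun i : Fin (2 * m + 1) => (zetaN N ^ k) ^ ((m : ℤ) - (i : ℕ)) := by
  rw [Zmat, diagonal_pow]
  congr 1
  ext i
  rw [Pi.pow_apply, ← zpow_natCast, ← zpow_natCast, zpow_comm]

theorem forall_zpow_mul_zpow_eq_one_iff {G : Type*} [DivisionMonoid G] {m : ℕ} (hm : 1 ≤ m)
    (w : G) :
    (∀ i j : Fin (2 * m + 1), w ^ ((m : ℤ) - (i : ℕ)) * w ^ ((m : ℤ) - (j : ℕ)) = 1) ↔ w = 1 := by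
  constructor
  · intro h
    simpa [Nat.cast_sub hm] using h ⟨m, by omega⟩ ⟨m - 1, by omega⟩
  · rintro rfl i j
    simp only [_root_.one_zpow, one_mul]

theorem stmt17_general {m N : ℕ} (hm : 1 ≤ m) (hN : N ≠ 0) (k : ℕ) :
    (Zmat N m ^ k * coinF m) ^ 2 = 1 ↔ N ∣ k := by
  rw [mul_sq_eq_one_iff_mul_mul_eq (coinF_sq m), Zmat_pow,
    diagonal_mul_mul_diagonal_eq_self_iff (coinF_apply_ne_zero m),
    forall_zpow_mul_zpow_eq_one_iff hm, (isPrimitiveRoot_zetaN hN).pow_eq_one_iff_dvd]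

/-- For odd `L = 2m+1 ≥ 3`, `(A^{F,L})² = I_L`, while `(Z^k A^{F,L})² ≠ I_L`
for every `1 ≤ k ≤ L−1`, where `Z = diag(ζ_L^m, …, ζ_L^{−m})`. -/
theorem stmt17 (m : ℕ) (hm : 1 ≤ m) :
    (coinF m) ^ 2 = 1 ∧
    ∀ k : ℕ, 1 ≤ k → k ≤ 2*m → ((Zmat (2*m+1) m) ^ k * coinF m) ^ 2 ≠ 1 := by
  refine ⟨coinF_sq m, fun k hk hkm h => Nat.not_dvd_of_pos_of_lt hk (Nat.lt_succ_of_le hkm) ?_⟩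
  exact (stmt17_general hm (2 * m).succ_ne_zero k).1 h
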